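/- Let I ⊆ ℝ be a nondegenerate interval, n ≥ 2, let ω be an n-dimensional positive Chebyshev system over I, and let T ⊆ ℝ₊ be a nonempty set. Then a function f : I → ℝ is ((t_1,…,t_n), ω)-convex on I for all t_1,…,t_n ∈ T if and only if, for all t,s ∈ T and all k ∈ {1,…,n}, the function f is ((t𝟏_k, s𝟏_{n−k}), ω)-convex on I. -/

import Mathlib

/-- `Phi ω x` is the determinant `det(ωᵢ(xⱼ))` of an `n`-tuple of functions
evaluated at an `n`-tuple of points. -/
noncomputable def Phi {n : ℕ} (ω : Fin n → ℝ → ℝ) (x : Fin n → ℝ) : ℝ :=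
  (Matrix.of fun i j => ω i (x j)).det

/-- `ω` is an `n`-dimensional positive Chebyshev system over `H`:
`Phi ω` is positive on all strictly increasing `n`-tuples of elements of `H`. -/
def IsPosChebyshev {n : ℕ} (ω : Fin n → ℝ → ℝ) (H : Set ℝ) : Prop :=
  ∀ x : Fin n → ℝ, StrictMono x → (∀ j, x j ∈ H) → 0 < Phi ω x

/-- The partial sum `t₁ + ⋯ + tⱼ` (empty for `j = 0`, everything for `j = n`). -/
noncomputable def psum {n : ℕ} (t : Fin n → ℝ) (j : Fin (n + 1)) : ℝ :=
  ∑ i ∈ Finset.univ.filter (fun i : Fin n => (i : ℕ) < (j : ℕ)), t i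

/-- `f` is `(t,ω)`-convex on `J`:
`Φ_{(ω,f)}(x, x+t₁h, x+(t₁+t₂)h, …, x+(t₁+⋯+tₙ)h) ≥ 0`
for all `x ∈ J` and `h > 0` with `x+(t₁+⋯+tₙ)h ∈ J`. -/
def TOmegaConvexOn {n : ℕ} (ω : Fin n → ℝ → ℝ) (t : Fin n → ℝ) (J : Set ℝ) (f : ℝ → ℝ) : Prop :=
  ∀ x ∈ J, ∀ h : ℝ, 0 < h → x + psum t (Fin.last n) * h ∈ J →
    0 ≤ Phi (Fin.snoc ω f) (fun j => x + psum t j * h)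

/-!
For points `x₀ < ⋯ < xₙ₊₁` and `0 < i < n + 1`, the determinant `Φ_{(ω,f)}` at the tuple without
`xᵢ` is a positive combination of the determinants at the tuple without `x₀` and at the tuple
without `xₙ₊₁`. Hence, along an increasing sequence in `I`, nonnegativity on all windows of `n + 1`
consecutive points propagates to all increasing `(n + 1)`-tuples of its terms. To get
`(t₁,…,tₙ)`-convexity, divide each step `tᵢ` into `n` equal parts: `n` consecutive parts then come
from at most two consecutive steps, so every window is of two-block type.
-/

lemma castSucc_succ_ne_last {n : ℕ} (i : Fin n) : i.castSucc.succ ≠ Fin.last (n + 1) :=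
  Fin.succ_castSucc i ▸ (Fin.castSucc_lt_last _).ne

section Determinants

variable {n : ℕ} (ω : Fin n → ℝ → ℝ)

lemma Phi_snoc_eq_sum (f : ℝ → ℝ) (x : Fin (n + 1) → ℝ) :
    Phi (Fin.snoc ω f) x =
      ∑ j : Fin (n + 1), (-1) ^ (n + (j : ℕ)) * f (x j) * Phi ω (x ∘ j.succAbove) := by
  rw [Phi, Matrix.det_succ_row _ (Fin.last n)]
  refine Finset.sum_congr rfl fun j _ => ?_
  congr 1
  · simp
  · rw [Phi]
    congr 1
    ext i k
    simp

lemma Phi_snoc_sub_sum_mul (f : ℝ → ℝ) (c : Fin n → ℝ)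
    (x : Fin (n + 1) → ℝ) :
    Phi (Fin.snoc ω fun y => f y - ∑ i, c i * ω i y) x = Phi (Fin.snoc ω f) x := by
  let A : Matrix (Fin (n + 1)) (Fin (n + 1)) ℝ :=
    Matrix.of fun i j => (Fin.snoc ω f : Fin (n + 1) → ℝ → ℝ) i (x j)
  let a : Fin (n + 1) → ℝ := Fin.snoc (fun i => -c i) 1
  have hrow : (Matrix.of fun i j => (Fin.snoc ω fun y => f y - ∑ i, c i * ω i y :
      Fin (n + 1) → ℝ → ℝ) i (x j)) = A.updateRow (Fin.last n) (∑ k, a k • A k) := by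
    ext i j
    refine Fin.lastCases ?_ (fun i => ?_) i
    · simp [A, a, Fin.sum_univ_castSucc, sub_eq_neg_add]
    · simp [A]
  rw [Phi, hrow, Matrix.det_updateRow_sum]
  simp [A, a, Phi]

lemma Phi_snoc_eq_of_succ_eq_zero {g : ℝ → ℝ} {x : Fin (n + 1) → ℝ}
    (hg : ∀ k : Fin n, g (x k.succ) = 0) :
    Phi (Fin.snoc ω g) x = (-1) ^ n * g (x 0) * Phi ω (x ∘ Fin.succ) := by
  simp [Phi_snoc_eq_sum, Fin.sum_univ_succ, hg]

lemma Phi_snoc_eq_of_castSucc_eq_zero {g : ℝ → ℝ} {x : Fin (n + 1) → ℝ}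
    (hg : ∀ k : Fin n, g (x k.castSucc) = 0) :
    Phi (Fin.snoc ω g) x = g (x (Fin.last n)) * Phi ω (x ∘ Fin.castSucc) := by
  simp [Phi_snoc_eq_sum, Fin.sum_univ_castSucc, hg, ← two_mul]

lemma Phi_snoc_eq_add_of_interior_eq_zero [NeZero n] {g : ℝ → ℝ}
    {x : Fin (n + 1) → ℝ} (hg : ∀ j, j ≠ 0 → j ≠ Fin.last n → g (x j) = 0) :
    Phi (Fin.snoc ω g) x =
      (-1) ^ n * g (x 0) * Phi ω (x ∘ Fin.succ) +
        g (x (Fin.last n)) * Phi ω (x ∘ Fin.castSucc) := by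
  rw [Phi_snoc_eq_sum, Fintype.sum_eq_add 0 (Fin.last n) (Fin.last_pos' (n := n)).ne]
  · simp [← two_mul]
  · rintro j ⟨hj₀, hj⟩
    rw [hg j hj₀ hj, mul_zero, zero_mul]

variable {ω}

lemma exists_sum_mul_eq_of_Phi_ne_zero {z : Fin n → ℝ} (hz : Phi ω z ≠ 0) (v : Fin n → ℝ) :
    ∃ c : Fin n → ℝ, ∀ k, ∑ i, c i * ω i (z k) = v k := by
  have hunit : IsUnit (Matrix.of fun i j => ω i (z j)) :=
    (Matrix.isUnit_iff_isUnit_det _).2 (isUnit_iff_ne_zero.2 hz)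
  obtain ⟨c, hc⟩ := Matrix.vecMul_surjective_iff_isUnit.2 hunit v
  exact ⟨c, congrFun hc⟩

lemma exists_Phi_snoc_eq_and_eq_zero {z : Fin n → ℝ} (hz : Phi ω z ≠ 0) (f : ℝ → ℝ) :
    ∃ g : ℝ → ℝ, (∀ x, Phi (Fin.snoc ω g) x = Phi (Fin.snoc ω f) x) ∧ ∀ k, g (z k) = 0 := by
  obtain ⟨c, hc⟩ := exists_sum_mul_eq_of_Phi_ne_zero hz (f ∘ z)
  exact ⟨_, Phi_snoc_sub_sum_mul ω f c, fun k => sub_eq_zero.2 (hc k).symm⟩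

-- Both sides depend on `f` only modulo the span of `ω`, so `f` may be taken to vanish at all
-- points except `x 0` and `x (Fin.last (n + 1))`. The indices other than these two are exactly
-- those of the form `i.castSucc.succ`.
lemma Phi_snoc_comp_succAbove_mul (f : ℝ → ℝ) {x : Fin (n + 2) → ℝ}
    (hx : Phi ω (fun k => x k.castSucc.succ) ≠ 0) (i : Fin n) :
    Phi (Fin.snoc ω f) (x ∘ i.castSucc.succ.succAbove) * Phi ω (fun k => x k.castSucc.succ) =
      Phi (Fin.snoc ω f) (x ∘ Fin.castSucc) *
          Phi ω (x ∘ i.castSucc.succ.succAbove ∘ Fin.succ) +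
        Phi (Fin.snoc ω f) (x ∘ Fin.succ) *
          Phi ω (x ∘ i.castSucc.succ.succAbove ∘ Fin.castSucc) := by
  have : NeZero n := i.neZero
  obtain ⟨g, hgf, hg⟩ := exists_Phi_snoc_eq_and_eq_zero hx f
  have hg_interior : ∀ q, q ≠ 0 → q ≠ Fin.last (n + 1) → g (x q) = 0 := by
    intro q hq₀ hq
    obtain ⟨j, rfl⟩ := Fin.exists_succ_eq.2 hq₀
    obtain ⟨k, rfl⟩ := Fin.exists_castSucc_eq.2 ((Fin.succ_ne_last_iff j).1 hq)
    exact hg k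
  have hcastSucc : Phi (Fin.snoc ω g) (x ∘ Fin.castSucc) =
      (-1) ^ n * g (x 0) * Phi ω (fun k => x k.castSucc.succ) :=
    Phi_snoc_eq_of_succ_eq_zero ω (x := x ∘ Fin.castSucc) hg
  have hsucc : Phi (Fin.snoc ω g) (x ∘ Fin.succ) =
      g (x (Fin.last (n + 1))) * Phi ω (fun k => x k.castSucc.succ) :=
    Phi_snoc_eq_of_castSucc_eq_zero ω (x := x ∘ Fin.succ) hg
  have hp₀ : i.castSucc.succ ≠ 0 := Fin.succ_ne_zero _
  have hp := castSucc_succ_ne_last i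
  have hremove : Phi (Fin.snoc ω g) (x ∘ i.castSucc.succ.succAbove) =
      (-1) ^ n * g (x 0) * Phi ω (x ∘ i.castSucc.succ.succAbove ∘ Fin.succ) +
        g (x (Fin.last (n + 1))) * Phi ω (x ∘ i.castSucc.succ.succAbove ∘ Fin.castSucc) := by
    rw [Phi_snoc_eq_add_of_interior_eq_zero ω (x := x ∘ i.castSucc.succ.succAbove) fun j hj₀ hj =>
      hg_interior _ (Fin.succAbove_ne_zero hp₀ hj₀) (Fin.succAbove_ne_last hp hj)]
    simp only [Function.comp_apply, Fin.succAbove_ne_zero_zero hp₀, Fin.succAbove_ne_last_last hp,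
      Function.comp_assoc]
  rw [← hgf, ← hgf, ← hgf, hcastSucc, hsucc, hremove]
  ring

lemma IsPosChebyshev.Phi_snoc_comp_succAbove_nonneg {I : Set ℝ} (hω : IsPosChebyshev ω I)
    {f : ℝ → ℝ} {x : Fin (n + 2) → ℝ} (hx : StrictMono x) (hxI : ∀ q, x q ∈ I)
    (hcastSucc : 0 ≤ Phi (Fin.snoc ω f) (x ∘ Fin.castSucc))
    (hsucc : 0 ≤ Phi (Fin.snoc ω f) (x ∘ Fin.succ)) (i : Fin n) :
    0 ≤ Phi (Fin.snoc ω f) (x ∘ i.castSucc.succ.succAbove) := by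
  have hpos : ∀ e : Fin n → Fin (n + 2), StrictMono e → 0 < Phi ω (x ∘ e) :=
    fun e he => hω _ (hx.comp he) fun _ => hxI _
  have hinner : 0 < Phi ω (fun k => x k.castSucc.succ) :=
    hpos _ (Fin.strictMono_succ.comp Fin.strictMono_castSucc)
  have hp := Fin.strictMono_succAbove i.castSucc.succ
  refine nonneg_of_mul_nonneg_left ?_ hinner
  rw [Phi_snoc_comp_succAbove_mul f hinner.ne']
  exact add_nonneg (mul_nonneg hcastSucc (hpos _ (hp.comp Fin.strictMono_succ)).le)
    (mul_nonneg hsucc (hpos _ (hp.comp Fin.strictMono_castSucc)).le)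

end Determinants

section Windows

variable {n : ℕ}

lemma strictMono_eq_add_or_exists_gap {g : Fin (n + 1) → ℕ} (hg : StrictMono g) :
    (∀ j : Fin (n + 1), g j = g 0 + j) ∨ ∃ i : Fin n, g i.castSucc + 1 < g i.succ := by
  refine or_iff_not_imp_right.2 fun hgap j => ?_
  push Not at hgap
  induction j using Fin.induction with
  | zero => simp
  | succ i ih =>
    have hlt : g i.castSucc < g i.succ := hg i.castSucc_lt_succ
    have hle := hgap i
    simp only [Fin.val_castSucc, Fin.val_succ] at ih ⊢
    omega

-- Induction on `g (Fin.last n) - g 0`: filling a gap of `g` gives an `(n + 2)`-tuple with the same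
-- end points, and dropping either end point of it makes the width smaller.
theorem strictMono_tuple_induction {P : (Fin (n + 1) → ℕ) → Prop}
    (window : ∀ a : ℕ, P fun j => a + j)
    (remove : ∀ g : Fin (n + 2) → ℕ, StrictMono g → P (g ∘ Fin.castSucc) → P (g ∘ Fin.succ) →
      ∀ i : Fin n, P (g ∘ i.castSucc.succ.succAbove))
    (g : Fin (n + 1) → ℕ) (hg : StrictMono g) : P g := by
  induction hw : g (Fin.last n) - g 0 using Nat.strong_induction_on generalizing g with
  | _ w ih =>
    subst hw
    obtain hwindow | ⟨i, hi⟩ := strictMono_eq_add_or_exists_gap hg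
    · rw [funext hwindow]
      exact window _
    · have : NeZero n := i.neZero
      let g' : Fin (n + 2) → ℕ := i.castSucc.succ.insertNth (g i.castSucc + 1) g
      have hg' : StrictMono g' := Fin.strictMono_insertNth hg i _ (Nat.lt_succ_self _) hi
      have hg'g : g' ∘ i.castSucc.succ.succAbove = g := by
        funext j
        exact Fin.insertNth_apply_succAbove ..
      have hfirst : g' 0 = g 0 := by
        rw [← hg'g, Function.comp_apply, Fin.succAbove_ne_zero_zero (Fin.succ_ne_zero _)]
      have hlast : g' (Fin.last (n + 1)) = g (Fin.last n) := by
        rw [← hg'g, Function.comp_apply, Fin.succAbove_ne_last_last (castSucc_succ_ne_last i)]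
      have hwidth : g 0 < g (Fin.last n) := hg (Fin.last_pos' (n := n))
      have hdropLast : g' (Fin.last n).castSucc - g' 0 < g (Fin.last n) - g 0 := by
        have : g' (Fin.last n).castSucc < g' (Fin.last (n + 1)) := hg' (Fin.castSucc_lt_last _)
        omega
      have hdropFirst : g' (Fin.last (n + 1)) - g' (Fin.succ 0) < g (Fin.last n) - g 0 := by
        have : g' 0 < g' (Fin.succ 0) := hg' (Fin.succ_pos _)
        omega
      rw [← hg'g]
      exact remove g' hg' (ih _ hdropLast _ (hg'.comp Fin.strictMono_castSucc) rfl)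
        (ih _ hdropFirst _ (hg'.comp Fin.strictMono_succ) rfl) i

lemma IsPosChebyshev.Phi_snoc_comp_nonneg {ω : Fin n → ℝ → ℝ} {I : Set ℝ}
    (hω : IsPosChebyshev ω I) (hI : I.OrdConnected) {f : ℝ → ℝ} {y : ℕ → ℝ} (hy : StrictMono y)
    (hwindow : ∀ a, y a ∈ I → y (a + n) ∈ I →
      0 ≤ Phi (Fin.snoc ω f) fun j : Fin (n + 1) => y (a + j))
    {g : Fin (n + 1) → ℕ} (hg : StrictMono g) (hfirst : y (g 0) ∈ I)
    (hlast : y (g (Fin.last n)) ∈ I) :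
    0 ≤ Phi (Fin.snoc ω f) (y ∘ g) := by
  refine strictMono_tuple_induction
    (P := fun g => y (g 0) ∈ I → y (g (Fin.last n)) ∈ I → 0 ≤ Phi (Fin.snoc ω f) (y ∘ g))
    hwindow (fun g hg hcastSucc hsucc i hfirst hlast => ?_) g hg hfirst hlast
  have : NeZero n := i.neZero
  rw [Function.comp_apply, Fin.succAbove_ne_zero_zero (Fin.succ_ne_zero _)] at hfirst
  rw [Function.comp_apply, Fin.succAbove_ne_last_last (castSucc_succ_ne_last i)] at hlast
  have hyg : StrictMono (y ∘ g) := hy.comp hg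
  have hgI : ∀ q, y (g q) ∈ I := fun q =>
    hI.out hfirst hlast ⟨hyg.monotone (Fin.zero_le q), hyg.monotone (Fin.le_last q)⟩
  exact hω.Phi_snoc_comp_succAbove_nonneg hyg hgI
    (hcastSucc (hgI _) (hgI _)) (hsucc (hgI _) (hgI _)) i

end Windows

section Steps

variable {n : ℕ} {ω : Fin n → ℝ → ℝ} {I : Set ℝ} {f : ℝ → ℝ}

lemma psum_succ (t : Fin n → ℝ) (i : Fin n) : psum t i.succ = psum t i.castSucc + t i := by
  have hinsert : Finset.univ.filter (fun l : Fin n => (l : ℕ) < i.succ) =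
      insert i (Finset.univ.filter fun l : Fin n => (l : ℕ) < i.castSucc) := by
    ext l
    simp only [Finset.mem_filter, Finset.mem_univ, true_and, Finset.mem_insert, Fin.ext_iff,
      Fin.val_succ, Fin.val_castSucc]
    omega
  rw [psum, hinsert, Finset.sum_insert (by simp), add_comm, psum]

lemma psum_sub (u : Fin (n + 1) → ℝ) (j : Fin (n + 1)) :
    psum (fun i => u i.succ - u i.castSucc) j = u j - u 0 := by
  induction j using Fin.induction with
  | zero => simp [psum]
  | succ i ih => rw [psum_succ, ih]; ring

lemma TOmegaConvexOn.of_const_mul {c : ℝ} (hc : 0 < c) {t : Fin n → ℝ}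
    (h : TOmegaConvexOn ω (fun i => c * t i) I f) : TOmegaConvexOn ω t I f := by
  have hpsum : ∀ j δ, psum (fun i => c * t i) j * (δ / c) = psum t j * δ := by
    intro j δ
    rw [psum, ← Finset.mul_sum, psum]
    field_simp
  intro x hx δ hδ hxδ
  simpa only [hpsum] using h x hx (δ / c) (div_pos hδ hc) (by rwa [hpsum])

theorem tOmegaConvexOn_of_windows (hI : I.OrdConnected) (hω : IsPosChebyshev ω I)
    {S : ℕ → ℝ} (hS : StrictMono S)
    (hwindow : ∀ a, TOmegaConvexOn ω (fun i : Fin n => S (a + i + 1) - S (a + i)) I f)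
    {g : Fin (n + 1) → ℕ} (hg : StrictMono g) :
    TOmegaConvexOn ω (fun i => S (g i.succ) - S (g i.castSucc)) I f := by
  intro x hx h hh hxh
  let y : ℕ → ℝ := fun q => x + (S q - S (g 0)) * h
  have hy : StrictMono y := fun p q hpq => by
    have := mul_lt_mul_of_pos_right (hS hpq) hh
    simp only [y]
    linarith
  have hy_comp : ∀ j, x + psum (fun i => S (g i.succ) - S (g i.castSucc)) j * h = y (g j) :=
    fun j => by rw [psum_sub fun j => S (g j)]
  have hy_window : ∀ a (j : Fin (n + 1)),
      y a + psum (fun i : Fin n => S (a + i + 1) - S (a + i)) j * h = y (a + j) := by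
    intro a j
    have := psum_sub (fun j : Fin (n + 1) => S (a + j)) j
    simp only [Fin.val_succ, Fin.val_castSucc, ← add_assoc, Fin.val_zero, add_zero] at this
    rw [this]
    ring
  rw [hy_comp] at hxh
  simp only [hy_comp]
  refine hω.Phi_snoc_comp_nonneg hI hy (fun a ha han => ?_) hg (by simpa [y]) hxh
  simpa only [hy_window] using
    hwindow a (y a) ha h hh (by rwa [hy_window, Fin.val_last])

end Steps

section Subdivision

lemma add_div_eq_ite_of_lt (a : ℕ) {l n : ℕ} (hl : l < n) :
    (a + l) / n = if l < n - a % n then a / n else a / n + 1 := by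
  rw [Nat.add_div (by omega), Nat.div_eq_of_lt hl, Nat.mod_eq_of_lt hl]
  split_ifs <;> omega

lemma sum_range_mul_succ_div_sub {R : Type*} [Ring R] (τ : ℕ → R) (n i : ℕ) :
    ∑ l ∈ Finset.range (n * (i + 1)), τ (l / n) - ∑ l ∈ Finset.range (n * i), τ (l / n) =
      n * τ i := by
  have hdiv : ∀ l ∈ Finset.range n, τ ((n * i + l) / n) = τ i := fun l hl => by
    have hln : l < n := Finset.mem_range.1 hl
    rw [Nat.mul_add_div (Nat.zero_lt_of_lt hln), Nat.div_eq_of_lt hln, add_zero]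
  rw [mul_add_one, Finset.sum_range_add, add_sub_cancel_left, Finset.sum_congr rfl hdiv]
  simp

variable {n : ℕ} {ω : Fin n → ℝ → ℝ} {I : Set ℝ} {f : ℝ → ℝ}

theorem tOmegaConvexOn_of_twoBlock [NeZero n] (hI : I.OrdConnected) (hω : IsPosChebyshev ω I)
    {τ : ℕ → ℝ} (hτ : ∀ i, 0 < τ i)
    (htwo : ∀ i k : ℕ, 1 ≤ k → k ≤ n →
      TOmegaConvexOn ω (fun j : Fin n => if (j : ℕ) < k then τ i else τ (i + 1)) I f) :
    TOmegaConvexOn ω (fun i : Fin n => τ i) I f := by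
  let S : ℕ → ℝ := fun q => ∑ l ∈ Finset.range q, τ (l / n)
  have hS_succ : ∀ q, S (q + 1) - S q = τ (q / n) := fun q => by
    simp only [S, Finset.sum_range_succ, add_sub_cancel_left]
  have hS : StrictMono S := strictMono_nat_of_lt_succ fun q =>
    sub_pos.1 ((hS_succ q).symm ▸ hτ _)
  have hwindow : ∀ a, TOmegaConvexOn ω (fun i : Fin n => S (a + i + 1) - S (a + i)) I f := by
    intro a
    have hmod : a % n < n := Nat.mod_lt _ (NeZero.pos n)
    convert htwo (a / n) (n - a % n) (by omega) (by omega) using 2 with i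
    rw [hS_succ, add_div_eq_ite_of_lt a i.is_lt, apply_ite τ]
  have hmul : StrictMono fun j : Fin (n + 1) => n * (j : ℕ) := fun _ _ hij =>
    Nat.mul_lt_mul_of_pos_left hij (NeZero.pos n)
  have hscaled := tOmegaConvexOn_of_windows hI hω hS hwindow hmul
  simp only [Fin.val_succ, Fin.val_castSucc, S, sum_range_mul_succ_div_sub] at hscaled
  exact hscaled.of_const_mul (Nat.cast_pos.2 (NeZero.pos n))

end Subdivision

/-- **Corollary 5⁺⁺.** Let `n ≥ 2` and `T ⊆ ℝ₊` a nonempty set. Then `f` is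
`((t₁,…,tₙ), ω)`-convex on `I` for all `t₁,…,tₙ ∈ T` if and only if, for all
`t, s ∈ T` and `k ∈ {1,…,n}`, the function `f` is `((t 𝟏_k, s 𝟏_{n−k}), ω)`-convex
on `I`. -/
theorem tOmegaConvex_forall_iff_twoBlock
    (n : ℕ) (hn : 2 ≤ n) (I : Set ℝ) (hI : I.OrdConnected)
    (hne : ∃ a ∈ I, ∃ b ∈ I, a < b)
    (ω : Fin n → ℝ → ℝ) (hω : IsPosChebyshev ω I)
    (T : Set ℝ) (hT : ∀ s ∈ T, 0 < s) (hTne : T.Nonempty) (f : ℝ → ℝ) :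
    (∀ t : Fin n → ℝ, (∀ i, t i ∈ T) → TOmegaConvexOn ω t I f) ↔
      (∀ t ∈ T, ∀ s ∈ T, ∀ k : ℕ, 1 ≤ k → k ≤ n →
        TOmegaConvexOn ω (fun j : Fin n => if (j : ℕ) < k then t else s) I f) := by
  constructor
  · intro h t ht s hs k _ _
    exact h _ fun i => by split_ifs <;> assumption
  · intro H t ht
    have : NeZero n := ⟨by omega⟩
    let τ : ℕ → ℝ := fun i => t (Fin.ofNat n i)
    have hτ : ∀ i, τ i ∈ T := fun i => ht _
    have htτ : (fun i : Fin n => τ i) = t := by simp [τ]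
    rw [← htτ]
    exact tOmegaConvexOn_of_twoBlock hI hω (fun i => hT _ (hτ i))
      fun i k => H (τ i) (hτ i) (τ (i + 1)) (hτ (i + 1)) k
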